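/- arXiv:1801.04803 — 2 statements merged into one kernel-verified Lean document; each statement's English description precedes it below -/
import Mathlib

section
/- Let q be a prime power and let v, d, k be integers with d even and 2 ≤ d/2 ≤ k ≤ v/2. Let C be a (v,#C,d;k)_q constant dimension code that contains a (v,d;k)_q lifted MRD code, and let c and y be integers with 1 ≤ y ≤ d/2, 1 ≤ c ≤ min{k−d/2, d/2}, and k − d/2 + 1 ≤ c + y. Then #C ≤ q^{(v−k)(k−d/2+1)} + ([v−k choose y]_q · [k choose c]_q / ([k−d/2 choose c]_q · [d/2 choose y]_q)) · q^{c(v−k−d/2)} + A_q(v−k, d−2(c−1); k−c+1). -/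
open Module

/-- The subspace of `F_q^v` of vectors whose first `k` coordinates vanish
(denoted `Γ` in the paper); its complement (as a set of vectors) is `Δ`. -/
def Gamma (K : Type) [Field K] (k v : ℕ) : Submodule K (Fin v → K) where
  carrier := {x | ∀ j : Fin v, (j : ℕ) < k → x j = 0}
  add_mem' := by
    intro a b ha hb j hj
    simp [ha j hj, hb j hj]
  zero_mem' := by
    intro j hj
    rfl
  smul_mem' := by
    intro c x hx j hj
    simp [hx j hj]

/-- The subspace distance `d_S(U,W) = dim(U+W) - dim(U ∩ W)`. -/
noncomputable def sDist {K : Type} [Field K] {v : ℕ}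
    (U W : Submodule K (Fin v → K)) : ℕ :=
  finrank K ↥(U ⊔ W) - finrank K ↥(U ⊓ W)

/-- A constant dimension code of dimension `k` and minimum subspace distance `d`. -/
def IsCDC (K : Type) [Field K] (v : ℕ) (d k : ℤ)
    (C : Set (Submodule K (Fin v → K))) : Prop :=
  (∀ U ∈ C, (finrank K U : ℤ) = k) ∧
  ∀ U ∈ C, ∀ W ∈ C, U ≠ W → d ≤ (sDist U W : ℤ)

/-- `A_q(v,d;k)`: the maximum cardinality of a `(v,M,d;k)_q` CDC. -/
noncomputable def Amax (K : Type) [Field K] (v : ℕ) (d k : ℤ) : ℕ :=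
  sSup {n | ∃ C : Set (Submodule K (Fin v → K)), IsCDC K v d k C ∧ C.ncard = n}

/-- Row `i` of the `k × v` matrix `(I_k | A)`. -/
def liftRow {K : Type} [Field K] {k v : ℕ} (A : Matrix (Fin k) (Fin (v - k)) K)
    (i : Fin k) : Fin v → K := fun j =>
  if (j : ℕ) < k then (if (i : ℕ) = (j : ℕ) then 1 else 0)
  else if h2 : (j : ℕ) - k < v - k then A i ⟨(j : ℕ) - k, h2⟩ else 0

/-- `M` is a `(v,d;k)_q` lifted MRD code: `M = { rowspan (I_k | A) : A ∈ R }`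
for a `[k × (v-k), q^((v-k)(k-d/2+1)), d/2]_q` rank metric code `R`. -/
def IsLMRD (q : ℕ) (K : Type) [Field K] (v d k : ℕ)
    (M : Set (Submodule K (Fin v → K))) : Prop :=
  ∃ R : Set (Matrix (Fin k) (Fin (v - k)) K),
    R.ncard = q ^ ((v - k) * (k - d / 2 + 1)) ∧
    (∀ A ∈ R, ∀ B ∈ R, A ≠ B → d / 2 ≤ (A - B).rank) ∧
    M = {U | ∃ A ∈ R, U = Submodule.span K (Set.range (liftRow A))}

/-- The Gaussian binomial coefficient `[a choose b]_q`, defined to be `0`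
unless `0 ≤ b ≤ a`. -/
noncomputable def qBin (q : ℕ) (a b : ℤ) : ℚ :=
  if 0 ≤ b ∧ b ≤ a then
    ∏ i ∈ Finset.range b.toNat,
      ((q : ℚ) ^ a - (q : ℚ) ^ (i : ℤ)) / ((q : ℚ) ^ b - (q : ℚ) ^ (i : ℤ))
  else 0

/-- `[[w, u; c]]_q = q^(u*c) * [w-u choose c]_q` for `0 ≤ c ≤ w-u`, else `0`. -/
noncomputable def qBinD (q : ℕ) (w u c : ℤ) : ℚ :=
  if 0 ≤ c ∧ c ≤ w - u then (q : ℚ) ^ (u * c) * qBin q (w - u) c else 0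

section LinearAlgebra

variable {K E W : Type*} [Field K] [AddCommGroup E] [Module K E] [AddCommGroup W] [Module K W]

/-- Every subspace contains subspaces of all smaller dimensions. -/
theorem exists_submodule_le_finrank_eq (X : Submodule K E) {m : ℕ} (hm : m ≤ finrank K X) :
    ∃ Y ≤ X, finrank K Y = m := by
  obtain ⟨f, hf⟩ := exists_linearIndependent_of_le_finrank hm
  have hf' : LinearIndependent K (X.subtype ∘ f) := hf.map' _ X.ker_subtype
  refine ⟨Submodule.span K (Set.range (X.subtype ∘ f)), ?_, ?_⟩
  · rw [Submodule.span_le]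
    rintro _ ⟨i, rfl⟩
    exact (f i).2
  · rw [finrank_span_eq_card hf', Fintype.card_fin]

/-- A linear section splits a tuple with independent image into a tuple in the kernel and an
independent tuple in the range. -/
noncomputable def tupleEquiv (g : E →ₗ[K] W) (σ : g.range →ₗ[K] E)
    (hσ : ∀ x, g (σ x) = x) (c : ℕ) :
    {b : Fin c → E // LinearIndependent K (g ∘ b)} ≃
      (Fin c → g.ker) × {h : Fin c → g.range // LinearIndependent K h} where
  toFun b := (fun i => ⟨b.1 i - σ (g.rangeRestrict (b.1 i)), by simp [hσ]⟩,
    ⟨fun i => g.rangeRestrict (b.1 i), .of_comp g.range.subtype b.2⟩)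
  invFun p := ⟨fun i => p.1 i + σ (p.2.1 i), by
    have h := p.2.2.map' g.range.subtype (Submodule.ker_subtype _)
    have e : g ∘ (fun i => (p.1 i : E) + σ (p.2.1 i)) = g.range.subtype ∘ p.2.1 := by
      ext i
      simp [hσ]
    exact e ▸ h⟩
  left_inv b := by ext i; simp
  right_inv p := by
    have h : ∀ i, g.rangeRestrict (p.1 i + σ (p.2.1 i)) = p.2.1 i := by
      intro i
      ext
      simp [hσ]
    ext i
    · simp [h]
    · simp [hσ]

theorem linearIndependent_comp_card_le [Finite E] (g : E →ₗ[K] W) {y c : ℕ} {a : Fin y → E}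
    {b : Fin c → E} (X : Submodule K E) (ha : LinearIndependent K a)
    (hb : LinearIndependent K (g ∘ b)) (hag : ∀ i, g (a i) = 0) (haX : ∀ i, a i ∈ X)
    (hbX : ∀ i, b i ∈ X) : c + y ≤ finrank K X := by
  rw [← (g.domRestrict X).finrank_range_add_finrank_ker]
  have : Finite (g.domRestrict X).range :=
    Finite.of_surjective _ (g.domRestrict X).surjective_rangeRestrict
  refine add_le_add ?_ ?_
  · have h : LinearIndependent K fun i => (g.domRestrict X).rangeRestrict ⟨b i, hbX i⟩ :=
      .of_comp (Submodule.subtype _) hb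
    simpa using h.fintype_card_le_finrank
  · have h : LinearIndependent K
        fun i => (⟨⟨a i, haX i⟩, hag i⟩ : (g.domRestrict X).ker) :=
      .of_comp (X.subtype ∘ₗ Submodule.subtype _) ha
    simpa using h.fintype_card_le_finrank

/-- Pairs of an independent `y`-tuple in the kernel and a `c`-tuple with independent image. -/
abbrev TuplePair (g : E →ₗ[K] W) (y c : ℕ) : Type _ :=
  {a : Fin y → g.ker // LinearIndependent K a} × {b : Fin c → E // LinearIndependent K (g ∘ b)}

/-- Double counting of tuple pairs in a family of subspaces with small pairwise intersections. -/
theorem ncard_mul_le_card_tuplePair [Finite E] (g : E →ₗ[K] W) (S : Set (Submodule K E))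
    {y c : ℕ} {N : ℚ} (hN : ∀ U ∈ S, N ≤ Nat.card (TuplePair (g.domRestrict U) y c))
    (hS : ∀ U ∈ S, ∀ U' ∈ S, U ≠ U' → finrank K ↥(U ⊓ U') < c + y) :
    S.ncard * N ≤ Nat.card (TuplePair g y c) := by
  have : Finite (Submodule K E) := Finite.of_injective _ SetLike.coe_injective
  have := Fintype.ofFinite S
  let φ : (Σ U : S, TuplePair (g.domRestrict U.1) y c) → TuplePair g y c := fun t =>
    (⟨fun i => ⟨(t.2.1.1 i).1.1, (t.2.1.1 i).2⟩, .of_comp g.ker.subtype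
      (t.2.1.2.map' (t.1.1.subtype ∘ₗ Submodule.subtype _)
        (LinearMap.ker_eq_bot.2 (Subtype.val_injective.comp Subtype.val_injective)))⟩,
     ⟨fun i => (t.2.2.1 i).1, t.2.2.2⟩)
  have hφ : Function.Injective φ := by
    rintro ⟨⟨U, hU⟩, ⟨a, ha⟩, ⟨b, hb⟩⟩ ⟨⟨U', hU'⟩, ⟨a', ha'⟩, ⟨b', hb'⟩⟩ h
    have h1 : ∀ i, (a i).1.1 = (a' i).1.1 := fun i =>
      congrArg (fun t : TuplePair g y c => (t.1.1 i).1) h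
    have h2 : ∀ i, (b i).1 = (b' i).1 := fun i =>
      congrArg (fun t : TuplePair g y c => t.2.1 i) h
    have hUU : U = U' := by
      by_contra hne
      refine (hS U hU U' hU' hne).not_ge ?_
      refine linearIndependent_comp_card_le g (a := fun i => (a i).1.1)
        (b := fun i => (b i).1) _ ?_ hb (fun i => (a i).2)
        (fun i => ⟨(a i).1.2, (h1 i).symm ▸ (a' i).1.2⟩)
        (fun i => ⟨(b i).2, (h2 i).symm ▸ (b' i).2⟩)
      exact ha.map' (U.subtype ∘ₗ Submodule.subtype _)
        (LinearMap.ker_eq_bot.2 (Subtype.val_injective.comp Subtype.val_injective))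
    subst hUU
    have e1 : a = a' := funext fun i => Subtype.ext (Subtype.ext (h1 i))
    have e2 : b = b' := funext fun i => Subtype.ext (h2 i)
    subst e1 e2
    rfl
  have hcard := Nat.card_le_card_of_injective φ hφ
  rw [Nat.card_sigma] at hcard
  calc (S.ncard : ℚ) * N = ∑ _U : S, N := by
        rw [Finset.sum_const, Finset.card_univ, nsmul_eq_mul, ← Nat.card_eq_fintype_card]
        rfl
    _ ≤ ∑ U : S, (Nat.card (TuplePair (g.domRestrict U.1) y c) : ℚ) :=
        Finset.sum_le_sum fun U _ => hN U U.2
    _ ≤ _ := by exact_mod_cast hcard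

variable [Fintype K]

theorem card_tuples_linearIndependent_comp [Finite E] (g : E →ₗ[K] W) {c : ℕ}
    (hc : c ≤ finrank K g.range) :
    Nat.card {b : Fin c → E // LinearIndependent K (g ∘ b)} =
      Fintype.card K ^ (finrank K g.ker * c) *
        ∏ i : Fin c, (Fintype.card K ^ finrank K g.range - Fintype.card K ^ (i : ℕ)) := by
  obtain ⟨σ, hσ⟩ := g.rangeRestrict.exists_rightInverse_of_surjective (by simp)
  have hσ' : ∀ x, g (σ x) = x := fun x => congrArg Subtype.val (LinearMap.congr_fun hσ x)
  have : Finite g.range := Finite.of_surjective _ g.surjective_rangeRestrict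
  rw [Nat.card_congr (tupleEquiv g σ hσ' c), Nat.card_prod, card_linearIndependent hc,
    Nat.card_fun, Module.natCard_eq_pow_finrank (K := K), Nat.card_eq_fintype_card,
    Nat.card_eq_fintype_card, Fintype.card_fin, pow_mul]

/-- The number of injective linear maps from an `m`-dimensional space to an `n`-dimensional
space, as a polynomial in the cardinality `x` of the field. -/
def falling (x : ℚ) (n m : ℕ) : ℚ := ∏ i ∈ Finset.range m, (x ^ n - x ^ i)

theorem falling_pos {x : ℚ} (hx : 1 < x) {n m : ℕ} (h : m ≤ n) : 0 < falling x n m :=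
  Finset.prod_pos fun _ hi => sub_pos.2 <|
    pow_lt_pow_right₀ hx ((Finset.mem_range.1 hi).trans_le h)

theorem natCast_prod_pow_sub_pow {q : ℕ} (hq : 0 < q) {n m : ℕ} (h : m ≤ n) :
    ((∏ i : Fin m, (q ^ n - q ^ (i : ℕ)) : ℕ) : ℚ) = falling q n m := by
  rw [Finset.prod_fin_eq_prod_range, falling, Nat.cast_prod]
  refine Finset.prod_congr rfl fun i hi => ?_
  have hi' := Finset.mem_range.1 hi
  rw [dif_pos hi', Nat.cast_sub (Nat.pow_le_pow_right hq (by omega))]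
  push_cast
  rfl

theorem card_tuplePair [Finite E] (g : E →ₗ[K] W) {y c : ℕ}
    (hy : y ≤ finrank K g.ker) (hc : c ≤ finrank K g.range) :
    (Nat.card (TuplePair g y c) : ℚ) =
      falling (Fintype.card K) (finrank K g.ker) y *
        ((Fintype.card K : ℚ) ^ (finrank K g.ker * c) *
          falling (Fintype.card K) (finrank K g.range) c) := by
  rw [Nat.card_prod, card_tuples_linearIndependent_comp g hc, card_linearIndependent hy,
    Nat.cast_mul, Nat.cast_mul, natCast_prod_pow_sub_pow Fintype.card_pos hy,
    natCast_prod_pow_sub_pow Fintype.card_pos hc, Nat.cast_pow]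

theorem mul_falling_le_falling_succ {x : ℚ} (hx : 1 < x) {n m : ℕ} (hm : 1 ≤ m) (h : m ≤ n) :
    x * falling x n m ≤ falling x (n + 1) m := by
  obtain ⟨m, rfl⟩ := Nat.exists_eq_add_of_le' hm
  rw [falling, falling, Finset.prod_range_succ', Finset.prod_range_succ', mul_comm, mul_assoc]
  have h0 : (1 : ℚ) < x ^ n := one_lt_pow₀ hx (by omega)
  have hpos : ∀ i ∈ Finset.range m, 0 ≤ x ^ n - x ^ (i + 1) := fun i hi =>
    sub_nonneg.2 <| pow_le_pow_right₀ hx.le (by have := Finset.mem_range.1 hi; omega)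
  refine mul_le_mul (Finset.prod_le_prod hpos fun i _ => ?_) ?_ ?_ ?_
  · gcongr <;> first | exact hx.le | omega
  · rw [pow_succ, pow_zero]
    nlinarith
  · nlinarith
  · refine Finset.prod_nonneg fun i hi => (hpos i hi).trans ?_
    gcongr <;> first | exact hx.le | omega

theorem pow_mul_falling_mul (x : ℚ) (n m : ℕ) :
    x ^ m * falling x n m * (x ^ (n + 1) - 1) = falling x (n + 1) m * (x ^ (n + 1) - x ^ m) := by
  have h : x ^ m * falling x n m = ∏ i ∈ Finset.range m, (x ^ (n + 1) - x ^ (i + 1)) := by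
    rw [falling, ← Finset.card_range m, ← Finset.prod_const, Finset.card_range,
      ← Finset.prod_mul_distrib]
    exact Finset.prod_congr rfl fun i _ => by ring
  have h1 := Finset.prod_range_succ (fun i => x ^ (n + 1) - x ^ i) m
  rw [Finset.prod_range_succ'] at h1
  rw [h, falling, ← h1, pow_zero]

theorem falling_succ_le {x : ℚ} (hx : 2 ≤ x) {n m : ℕ} (h : m ≤ n) :
    falling x (n + 1) m ≤ x * (x ^ m * falling x n m) := by
  have hx1 : 1 < x := by linarith
  have h1 : 0 < x ^ (n + 1) - 1 := sub_pos.2 (one_lt_pow₀ hx1 (by omega))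
  have hF := falling_pos hx1 (Nat.le_succ_of_le h)
  refine le_of_mul_le_mul_right ?_ h1
  rw [mul_assoc x, pow_mul_falling_mul, mul_left_comm]
  refine mul_le_mul_of_nonneg_left ?_ hF.le
  have h2 : x ^ m ≤ x ^ n := pow_le_pow_right₀ hx1.le h
  have h3 : 0 < x ^ n := by positivity
  have h4 : x * x ^ m ≤ x * x ^ n := by gcongr
  rw [pow_succ]
  nlinarith [mul_nonneg (mul_nonneg (sub_nonneg.2 hx) h3.le) (by linarith : 0 ≤ x)]

/-- The value of `card_tuplePair` for a `k`-dimensional space with kernel of dimension `s`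
increases with `s`. -/
theorem tuplePair_count_mono {x : ℚ} (hx : 2 ≤ x) {k y c δ s : ℕ} (hy : 1 ≤ y) (hyδ : y ≤ δ)
    (hδs : δ ≤ s) (hs : s + c ≤ k) :
    falling x δ y * (x ^ (δ * c) * falling x (k - δ) c) ≤
      falling x s y * (x ^ (s * c) * falling x (k - s) c) := by
  have hx1 : 1 < x := by linarith
  induction s, hδs using Nat.le_induction with
  | base => exact le_rfl
  | succ s hδs ih =>
    refine (ih (by omega)).trans ?_
    obtain ⟨a, rfl⟩ : ∃ a, k = s + 1 + a := Nat.exists_eq_add_of_le (by omega)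
    rw [show s + 1 + a - s = a + 1 by omega, show s + 1 + a - (s + 1) = a by omega]
    have hca : c ≤ a := by omega
    have hF := falling_pos hx1 (hyδ.trans hδs)
    have hG := falling_pos hx1 hca
    calc falling x s y * (x ^ (s * c) * falling x (a + 1) c)
        ≤ falling x s y * (x ^ (s * c) * (x * (x ^ c * falling x a c))) := by
          gcongr
          exact falling_succ_le hx hca
      _ = x * falling x s y * (x ^ ((s + 1) * c) * falling x a c) := by ring
      _ ≤ _ := by
          gcongr
          exact mul_falling_le_falling_succ hx1 hy (hyδ.trans hδs)

end LinearAlgebra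

section Code

variable {K : Type} [Field K] {v k : ℕ}

theorem sDist_add_two_mul_finrank_inf {U W : Submodule K (Fin v → K)} (hU : finrank K U = k)
    (hW : finrank K W = k) : sDist U W + 2 * finrank K ↥(U ⊓ W) = 2 * k := by
  have h := Submodule.finrank_sup_add_finrank_inf_eq U W
  have h1 := Submodule.finrank_mono (inf_le_left : U ⊓ W ≤ U)
  unfold sDist
  omega

/-- The projection onto the first `k` coordinates. -/
def headProj (K : Type) [Field K] {k v : ℕ} (h : k ≤ v) : (Fin v → K) →ₗ[K] (Fin k → K) :=
  LinearMap.funLeft K K (Fin.castLE h)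

/-- The projection onto the last `v - k` coordinates. -/
def tailProj (K : Type) [Field K] {k v : ℕ} (h : k ≤ v) : (Fin v → K) →ₗ[K] (Fin (v - k) → K) :=
  LinearMap.funLeft K K fun j => ⟨k + j, by omega⟩

theorem range_headProj (h : k ≤ v) : (headProj K h).range = ⊤ :=
  LinearMap.range_eq_top.2 <|
    LinearMap.funLeft_surjective_of_injective K K _ (Fin.castLE_injective h)

theorem finrank_ker_headProj (h : k ≤ v) : finrank K (headProj K h).ker = v - k := by
  have h1 := (headProj K h).finrank_range_add_finrank_ker
  rw [range_headProj, finrank_top, finrank_fin_fun, finrank_fin_fun] at h1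
  omega

theorem mem_span_liftRow (h : k ≤ v) (A : Matrix (Fin k) (Fin (v - k)) K) {w : Fin v → K}
    (hw : tailProj K h w = Matrix.vecMul (headProj K h w) A) :
    w ∈ Submodule.span K (Set.range (liftRow A)) := by
  have e : w = ∑ i, headProj K h w i • liftRow A i := by
    ext j
    simp only [Finset.sum_apply, Pi.smul_apply, smul_eq_mul, liftRow]
    by_cases hj : (j : ℕ) < k
    · simp only [hj, if_true, mul_ite, mul_one, mul_zero]
      rw [Finset.sum_eq_single (⟨j, hj⟩ : Fin k)]
      · simp [headProj, LinearMap.funLeft_apply]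
      · intro i _ hi
        exact if_neg fun e => hi (Fin.ext e)
      · simp
    · have hj' : (j : ℕ) - k < v - k := by omega
      have h1 := congrFun hw ⟨j - k, hj'⟩
      have h2 : (⟨k + (j - k), by omega⟩ : Fin v) = j := Fin.ext (by simp; omega)
      simp only [tailProj, LinearMap.funLeft_apply, h2] at h1
      simp only [hj, hj', if_false, dif_pos, h1, Matrix.vecMul, dotProduct]
  rw [e]
  exact Submodule.sum_mem _ fun i _ =>
    Submodule.smul_mem _ _ (Submodule.subset_span (Set.mem_range_self i))

/-- Left multiplication by a full-rank matrix maps an MRD code onto all matrices. -/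
theorem exists_mul_eq_of_mrd [Fintype K] {m n t r : ℕ} {R : Set (Matrix (Fin m) (Fin n) K)}
    (hR : R.ncard = Fintype.card K ^ (n * t))
    (hrank : ∀ A ∈ R, ∀ B ∈ R, A ≠ B → r ≤ (A - B).rank) (htr : m < t + r)
    {P : Matrix (Fin t) (Fin m) K} (hP : LinearIndependent K P.row)
    (Q : Matrix (Fin t) (Fin n) K) : ∃ A ∈ R, P * A = Q := by
  have hinj : Set.InjOn (fun A => P * A) R := by
    intro A hA B hB hAB
    by_contra hne
    have h0 : P * (A - B) = 0 := by rw [Matrix.mul_sub, sub_eq_zero]; exact hAB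
    have h1 := Matrix.rank_add_rank_le_card_of_mul_eq_zero h0
    have h2 := hrank A hA B hB hne
    rw [hP.rank_matrix, Fintype.card_fin, Fintype.card_fin] at h1
    omega
  have huniv : (fun A => P * A) '' R = Set.univ := by
    refine Set.eq_of_subset_of_ncard_le (Set.subset_univ _) ?_ Set.finite_univ
    rw [hinj.ncard_image, hR, Set.ncard_univ, Module.natCard_eq_pow_finrank (K := K),
      Nat.card_eq_fintype_card, Module.finrank_matrix]
    simp [mul_comm]
  have hQ : Q ∈ (fun A => P * A) '' R := huniv ▸ Set.mem_univ Q
  exact hQ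

/-- A subspace whose projection to the first `k` coordinates has dimension at least `t`
shares a `t`-dimensional subspace with some codeword of a lifted MRD code. -/
theorem exists_le_finrank_inf_liftRow [Fintype K] (h : k ≤ v) {t r : ℕ}
    {R : Set (Matrix (Fin k) (Fin (v - k)) K)}
    (hR : R.ncard = Fintype.card K ^ ((v - k) * t))
    (hrank : ∀ A ∈ R, ∀ B ∈ R, A ≠ B → r ≤ (A - B).rank) (htr : k < t + r)
    (U : Submodule K (Fin v → K)) (hU : t ≤ finrank K ((headProj K h).domRestrict U).range) :
    ∃ A ∈ R, t ≤ finrank K ↥(U ⊓ Submodule.span K (Set.range (liftRow A))) := by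
  obtain ⟨f, hf⟩ := exists_linearIndependent_of_le_finrank hU
  choose b hb using fun i => (f i).2
  have hb' : (headProj K h).domRestrict U ∘ b = Submodule.subtype _ ∘ f := funext hb
  have hLI : LinearIndependent K ((headProj K h).domRestrict U ∘ b) := by
    rw [hb']
    exact hf.map' _ (Submodule.ker_subtype _)
  obtain ⟨A, hA, hPA⟩ := exists_mul_eq_of_mrd hR hrank htr
    (P := Matrix.of fun i => headProj K h (b i)) hLI
    (Matrix.of fun i => tailProj K h (b i))
  refine ⟨A, hA, ?_⟩
  have hmem : ∀ i, (b i : Fin v → K) ∈ U ⊓ Submodule.span K (Set.range (liftRow A)) :=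
    fun i => ⟨(b i).2, mem_span_liftRow h A (congrFun hPA i).symm⟩
  have hLI' : LinearIndependent K fun i =>
      (⟨b i, hmem i⟩ : ↥(U ⊓ Submodule.span K (Set.range (liftRow A)))) :=
    .of_comp (headProj K h ∘ₗ Submodule.subtype _) hLI
  simpa using hLI'.fintype_card_le_finrank

theorem ncard_le_Amax [Finite K] {d m : ℤ} {D : Set (Submodule K (Fin v → K))}
    (hD : IsCDC K v d m D) : D.ncard ≤ Amax K v d m := by
  have : Finite (Submodule K (Fin v → K)) := Finite.of_injective _ SetLike.coe_injective
  refine le_csSup ⟨Nat.card (Submodule K (Fin v → K)), ?_⟩ ⟨D, hD, rfl⟩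
  rintro _ ⟨C, -, rfl⟩
  exact Set.ncard_le_card C

/-- Codewords meeting a fixed `n`-dimensional subspace `g.ker` in dimension at least `m` are at
most as many as a code of `m`-dimensional subspaces of an `n`-dimensional space. -/
theorem ncard_le_Amax_of_finrank_ker [Finite K] {W : Type*} [AddCommGroup W] [Module K W]
    (g : (Fin v → K) →ₗ[K] W) {n m s : ℕ} (hn : finrank K g.ker = n)
    {B : Set (Submodule K (Fin v → K))}
    (hB : ∀ U ∈ B, m ≤ finrank K (g.domRestrict U).ker)
    (hint : ∀ U ∈ B, ∀ W ∈ B, U ≠ W → finrank K ↥(U ⊓ W) ≤ s) (hs : s < m) {d : ℤ}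
    (hd : d ≤ 2 * m - 2 * s) : B.ncard ≤ Amax K n d m := by
  have e : (Fin n → K) ≃ₗ[K] g.ker := LinearEquiv.ofFinrankEq _ _ (by simp [hn])
  let ι : (Fin n → K) →ₗ[K] (Fin v → K) := g.ker.subtype ∘ₗ e.toLinearMap
  have hι : Function.Injective ι := Subtype.val_injective.comp e.injective
  have hle : ∀ X : Submodule K (Fin v → K), finrank K (X.comap ι) ≤ finrank K X := fun X =>
    LinearMap.finrank_le_finrank_of_injective
      (f := ι.restrict (p := X.comap ι) (q := X) fun _ hx => hx)
      fun a b hab => by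
        have h := congrArg Subtype.val hab
        exact Subtype.ext (hι h)
  have hex : ∀ U : B, ∃ Y ≤ U.1.comap ι, finrank K Y = m := fun U => by
    refine exists_submodule_le_finrank_eq _ ((hB U U.2).trans ?_)
    let f : (g.domRestrict U.1).ker →ₗ[K] g.ker :=
      (U.1.subtype ∘ₗ Submodule.subtype _).codRestrict g.ker fun x => x.2
    refine LinearMap.finrank_le_finrank_of_injective
      (f := (e.symm.toLinearMap ∘ₗ f).codRestrict (U.1.comap ι) fun x => ?_) fun a b hab => ?_
    · change g.ker.subtype (e (e.symm (f x))) ∈ U.1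
      rw [e.apply_symm_apply]
      exact x.1.2
    · have h1 := e.symm.injective (congrArg Subtype.val hab)
      have h2 := congrArg Subtype.val h1
      exact Subtype.ext (Subtype.ext h2)
  choose Y hY hYm using hex
  have hYint : ∀ U W : B, U ≠ W → finrank K ↥(Y U ⊓ Y W) ≤ s := fun U W hUW => by
    refine le_trans ?_ (hint U U.2 W W.2 fun h => hUW (Subtype.ext h))
    refine (Submodule.finrank_mono (inf_le_inf (hY U) (hY W))).trans ?_
    rw [← Submodule.comap_inf]
    exact hle _
  have hYinj : Function.Injective Y := by
    intro U W hUW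
    by_contra hne
    have h1 := hYint U W hne
    rw [hUW, inf_idem, hYm] at h1
    omega
  have hcard : B.ncard = (Set.range Y).ncard := by
    rw [← Set.image_univ, Set.ncard_image_of_injective _ hYinj, Set.ncard_univ]
    rfl
  rw [hcard]
  refine ncard_le_Amax ⟨?_, ?_⟩
  · rintro _ ⟨U, rfl⟩
    exact_mod_cast hYm U
  · rintro _ ⟨U, rfl⟩ _ ⟨W, rfl⟩ hne
    have h1 := hYint U W fun h => hne (congrArg Y h)
    have h2 := sDist_add_two_mul_finrank_inf (hYm U) (hYm W)
    omega

end Code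

theorem qBin_natCast (q a b : ℕ) (h : b ≤ a) :
    qBin q a b = falling q a b / falling q b b := by
  rw [qBin, if_pos ⟨by positivity, by exact_mod_cast h⟩, falling, falling, Finset.prod_div_distrib]
  simp

/-- the second LMRD bound (Proposition 2 of the paper). -/
theorem stmt9 (q : ℕ) (K : Type) [Field K] [Fintype K] (hq : Fintype.card K = q)
    (v d k : ℕ) (hd : Even d) (hd2 : 2 ≤ d / 2) (hdk : d / 2 ≤ k) (hkv : 2 * k ≤ v)
    (C M : Set (Submodule K (Fin v → K)))
    (hC : IsCDC K v (d : ℤ) (k : ℤ) C) (hM : IsLMRD q K v d k M) (hMC : M ⊆ C)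
    (c y : ℤ) (hy1 : 1 ≤ y) (hy2 : y ≤ (d : ℤ) / 2)
    (hc1 : 1 ≤ c) (hc2 : c ≤ (k : ℤ) - (d : ℤ) / 2) (hc3 : c ≤ (d : ℤ) / 2)
    (hcy : (k : ℤ) - (d : ℤ) / 2 + 1 ≤ c + y) :
    (C.ncard : ℚ) ≤ (q : ℚ) ^ ((v - k) * (k - d / 2 + 1))
      + (qBin q ((v : ℤ) - k) y * qBin q (k : ℤ) c)
          / (qBin q ((k : ℤ) - (d : ℤ) / 2) c * qBin q ((d : ℤ) / 2) y)
          * (q : ℚ) ^ (c * ((v : ℤ) - k - (d : ℤ) / 2))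
      + (Amax K (v - k) ((d : ℤ) - 2 * (c - 1)) ((k : ℤ) - c + 1) : ℚ) := by
  obtain ⟨δ, rfl⟩ : ∃ δ, d = 2 * δ := hd.exists_two_nsmul.imp fun _ h => by simpa using h
  have hδ : 2 * δ / 2 = δ := by omega
  have hδ' : ((2 * δ : ℕ) : ℤ) / 2 = δ := by omega
  rw [hδ] at hd2 hdk
  rw [hδ'] at hy2 hc2 hc3 hcy
  lift y to ℕ using by omega
  lift c to ℕ using by omega
  obtain ⟨R, hRcard, hRrank, rfl⟩ := hM
  rw [hδ, ← hq] at hRcard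
  rw [hδ] at hRrank
  obtain ⟨hCdim, hCdist⟩ := hC
  have hkv' : k ≤ v := by omega
  have hdim : ∀ U ∈ C, finrank K U = k := fun U hU => by exact_mod_cast hCdim U hU
  have hinf : ∀ U ∈ C, ∀ W ∈ C, U ≠ W → finrank K ↥(U ⊓ W) ≤ k - δ := fun U hU W hW hne => by
    have h1 := hCdist U hU W hW hne
    have h2 := sDist_add_two_mul_finrank_inf (hdim U hU) (hdim W hW)
    omega
  set g := headProj K hkv' with hg
  set M : Set (Submodule K (Fin v → K)) :=
    {U | ∃ A ∈ R, U = Submodule.span K (Set.range (liftRow A))} with hMdef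
  have hrk : ∀ U ∈ C, finrank K (g.domRestrict U).range + finrank K (g.domRestrict U).ker = k :=
    fun U hU => by rw [LinearMap.finrank_range_add_finrank_ker, hdim U hU]
  have hrange : ∀ U ∈ C \ M, finrank K (g.domRestrict U).range ≤ k - δ := by
    rintro U ⟨hU, hUM⟩
    by_contra! hlt
    obtain ⟨A, hA, hAU⟩ := exists_le_finrank_inf_liftRow hkv' hRcard hRrank (by omega) U hlt
    have h1 := hinf U hU _ (hMC ⟨A, hA, rfl⟩) fun h => hUM ⟨A, hA, h⟩
    omega
  set S : Set (Submodule K (Fin v → K)) :=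
    {U ∈ C \ M | c ≤ finrank K (g.domRestrict U).range} with hSdef
  set B : Set (Submodule K (Fin v → K)) :=
    {U ∈ C \ M | finrank K (g.domRestrict U).range < c} with hBdef
  have hfin : Finite (Submodule K (Fin v → K)) := Finite.of_injective _ SetLike.coe_injective
  have hsplit : C.ncard ≤ M.ncard + S.ncard + B.ncard := by
    have hsub : C ⊆ M ∪ S ∪ B := fun U hU => by
      by_cases hUM : U ∈ M
      · exact .inl (.inl hUM)
      · by_cases hUc : c ≤ finrank K (g.domRestrict U).range
        · exact .inl (.inr ⟨⟨hU, hUM⟩, hUc⟩)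
        · exact .inr ⟨⟨hU, hUM⟩, not_le.1 hUc⟩
    have h1 := Set.ncard_le_ncard hsub (Set.toFinite _)
    have h2 := Set.ncard_union_le (M ∪ S) B
    have h3 := Set.ncard_union_le M S
    omega
  have hMcard : M.ncard ≤ q ^ ((v - k) * (k - δ + 1)) := by
    have h1 : M = (fun A => Submodule.span K (Set.range (liftRow A))) '' R := by
      ext U
      exact exists_congr fun A => and_congr_right fun _ => eq_comm
    rw [h1, ← hq, ← hRcard]
    exact Set.ncard_image_le (Set.toFinite _)
  have hBcard : B.ncard ≤ Amax K (v - k) (((2 * δ : ℕ) : ℤ) - 2 * (c - 1)) ((k : ℤ) - c + 1) := by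
    have hm : (k : ℤ) - c + 1 = ((k - c + 1 : ℕ) : ℤ) := by omega
    rw [hm]
    refine ncard_le_Amax_of_finrank_ker g (s := k - δ) (finrank_ker_headProj hkv') ?_ ?_
      (by omega) (by omega)
    · rintro U ⟨hU, hUc⟩
      have h1 := hrk U hU.1
      omega
    · rintro U ⟨hU, -⟩ W ⟨hW, -⟩ hne
      exact hinf U hU.1 W hW.1 hne
  have hq2 : (2 : ℚ) ≤ q := by
    rw [← hq]
    exact_mod_cast Fintype.one_lt_card (α := K)
  have hq1 : (1 : ℚ) < q := by linarith
  have hScard : (S.ncard : ℚ) * (falling q δ y * ((q : ℚ) ^ (δ * c) * falling q (k - δ) c)) ≤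
      falling q (v - k) y * ((q : ℚ) ^ ((v - k) * c) * falling q k c) := by
    have hker : finrank K g.ker = v - k := finrank_ker_headProj hkv'
    have hran : finrank K g.range = k := by rw [hg, range_headProj, finrank_top, finrank_fin_fun]
    have htot := card_tuplePair g (y := y) (c := c) (by omega) (by omega)
    rw [hker, hran, hq] at htot
    rw [← htot]
    refine ncard_mul_le_card_tuplePair g S ?_ ?_
    · rintro U ⟨hU, hUc⟩
      have h1 := hrk U hU.1
      have h2 := hrange U hU
      rw [card_tuplePair (g.domRestrict U) (by omega) hUc, hq,
        show finrank K (g.domRestrict U).range = k - finrank K (g.domRestrict U).ker by omega]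
      exact tuplePair_count_mono hq2 (by omega) (by omega) (by omega) (by omega)
    · rintro U ⟨hU, -⟩ W ⟨hW, -⟩ hne
      have h1 := hinf U hU.1 W hW.1 hne
      omega
  have hterm : (S.ncard : ℚ) ≤ (qBin q ((v : ℤ) - k) y * qBin q (k : ℤ) c)
      / (qBin q ((k : ℤ) - δ) c * qBin q (δ : ℤ) y) * (q : ℚ) ^ (c * ((v : ℤ) - k - δ)) := by
    rw [show (v : ℤ) - k = ((v - k : ℕ) : ℤ) by omega, show (k : ℤ) - δ = ((k - δ : ℕ) : ℤ) by omega,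
      show (c : ℤ) * (((v - k : ℕ) : ℤ) - δ) = (((v - k) * c : ℕ) : ℤ) - ((δ * c : ℕ) : ℤ) by
        push_cast; ring,
      zpow_sub₀ (by positivity), zpow_natCast, zpow_natCast,
      qBin_natCast _ _ _ (by omega), qBin_natCast _ _ _ (by omega),
      qBin_natCast _ _ _ (by omega), qBin_natCast _ _ _ (by omega)]
    have p1 := falling_pos hq1 (show y ≤ δ by omega)
    have p2 := falling_pos hq1 (show c ≤ k - δ by omega)
    have p3 := falling_pos hq1 (le_refl y)
    have p4 := falling_pos hq1 (le_refl c)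
    rw [← le_div_iff₀ (by positivity)] at hScard
    refine hScard.trans_eq ?_
    field_simp
  rw [hδ, hδ']
  have h1 : (C.ncard : ℚ) ≤ M.ncard + S.ncard + B.ncard := by exact_mod_cast hsplit
  have h2 : (M.ncard : ℚ) ≤ (q : ℚ) ^ ((v - k) * (k - δ + 1)) := by exact_mod_cast hMcard
  have h3 : (B.ncard : ℚ) ≤
      Amax K (v - k) (((2 * δ : ℕ) : ℤ) - 2 * (c - 1)) ((k : ℤ) - c + 1) := by
    exact_mod_cast hBcard
  linarith
end

section
/- For every integer l ≥ 1 and every prime power q, there exists a (6+3l, q^{6+4l} + q^{2+l} + 1, 4+2l; 3+l)_q constant dimension code that contains a (6+3l, 4+2l; 3+l)_q lifted MRD code as a subset. -/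
open Module

section FieldExtension

theorem exists_field_extension_finrank (K : Type) [Field K] [Finite K] (n : ℕ) (hn : n ≠ 0) :
    ∃ (L : Type) (_ : Field L) (_ : Algebra K L), Finite L ∧ finrank K L = n := by
  obtain ⟨p, hp⟩ := CharP.exists K
  have : Fact p.Prime := ⟨CharP.char_is_prime K p⟩
  have : NeZero n := ⟨hn⟩
  exact ⟨FiniteField.Extension K p n, inferInstance, inferInstance, inferInstance,
    FiniteField.finrank_extension K p n⟩

theorem mem_range_algebraMap_of_pow_card_eq_self {K L : Type} [Field K] [Fintype K] [Field L]
    [Finite L] [Algebra K L] {x : L} (hx : x ^ Fintype.card K = x) :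
    ∃ c : K, algebraMap K L c = x := by
  refine (IsGalois.mem_range_algebraMap_iff_fixed (F := K) (E := L) x).2 fun g => ?_
  obtain ⟨p, hp⟩ := CharP.exists K
  have : Fact p.Prime := ⟨CharP.char_is_prime K p⟩
  obtain ⟨i, hi⟩ := FiniteField.exists_forall_apply_eq_pow K p L g
  rw [hi, Nat.card_eq_fintype_card]
  clear hi
  induction i with
  | zero => simp
  | succ i ih => rw [pow_succ, pow_mul, ih, hx]

end FieldExtension

section Gabidulin

variable {K L : Type} [Field K] [Fintype K] [Field L] [Algebra K L]

/-- The linearized polynomial `a x + b x ^ q` as a `K`-linear map. -/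
noncomputable def linPoly (a b : L) : L →ₗ[K] L :=
  LinearMap.mulLeft K a + LinearMap.mulLeft K b ∘ₗ (FiniteField.frobeniusAlgHom K L).toLinearMap

theorem linPoly_apply (a b x : L) :
    linPoly (K := K) a b x = a * x + b * x ^ Fintype.card K := by
  simp [linPoly]

theorem linPoly_sub (a b c d : L) :
    linPoly (K := K) a b - linPoly c d = linPoly (a - c) (b - d) := by
  ext x
  simp only [LinearMap.sub_apply, linPoly_apply]
  ring

theorem linPoly_roots_proportional [Finite L] {a b x z : L} (hab : a ≠ 0 ∨ b ≠ 0) (hz : z ≠ 0)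
    (hz0 : linPoly (K := K) a b z = 0) (hx0 : linPoly (K := K) a b x = 0) :
    ∃ c : K, x = c • z := by
  rw [linPoly_apply] at hz0 hx0
  have hzq : z ^ Fintype.card K ≠ 0 := pow_ne_zero _ hz
  have hb : b ≠ 0 := by
    rintro rfl
    simp_all
  have key : (x / z) ^ Fintype.card K = x / z := by
    rw [div_pow, div_eq_div_iff hzq hz]
    apply mul_left_cancel₀ hb
    linear_combination z * hx0 - x * hz0
  obtain ⟨c, hc⟩ := mem_range_algebraMap_of_pow_card_eq_self key
  exact ⟨c, by rw [Algebra.smul_def, hc, div_mul_cancel₀ _ hz]⟩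

end Gabidulin

section Submodules

variable {K V W : Type} [Field K] [AddCommGroup V] [Module K V] [AddCommGroup W] [Module K W]

theorem finrank_le_one_of_forall_smul {S : Submodule K V} (z : V)
    (h : ∀ x ∈ S, ∃ c : K, x = c • z) : finrank K S ≤ 1 := by
  have hle : S ≤ Submodule.span K {z} := by
    intro x hx
    obtain ⟨c, rfl⟩ := h x hx
    exact Submodule.smul_mem _ _ (Submodule.mem_span_singleton_self z)
  exact (Submodule.finrank_mono hle).trans
    ((finrank_span_le_card {z}).trans (by simp))

theorem finrank_le_one_of_proportional {S : Submodule K V}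
    (h : ∀ z ∈ S, z ≠ 0 → ∀ x ∈ S, ∃ c : K, x = c • z) : finrank K S ≤ 1 := by
  by_cases hS : ∃ z ∈ S, z ≠ 0
  · obtain ⟨z, hz, hz0⟩ := hS
    exact finrank_le_one_of_forall_smul z (h z hz hz0)
  · push Not at hS
    exact finrank_le_one_of_forall_smul 0 fun x hx => ⟨0, by simp [hS x hx]⟩

theorem finrank_graph (f : V →ₗ[K] W) : finrank K f.graph = finrank K V := by
  rw [LinearMap.graph_eq_range_prod]
  exact LinearMap.finrank_range_of_inj fun x y h => congrArg Prod.fst h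

theorem finrank_graph_inf_graph_le [FiniteDimensional K V] [FiniteDimensional K W]
    {f g : V →ₗ[K] W} (h : finrank K (LinearMap.ker (f - g)) ≤ 1) :
    finrank K ↥(f.graph ⊓ g.graph) ≤ 1 := by
  have hle : f.graph ⊓ g.graph ≤
      (LinearMap.ker (f - g)).map (LinearMap.id.prod f) := by
    rintro ⟨x, y⟩ ⟨hf, hg⟩
    have hf : y = f x := hf
    have hg : y = g x := hg
    refine ⟨x, ?_, ?_⟩
    · simp [← hf, ← hg]
    · simp [hf]
  exact (Submodule.finrank_mono hle).trans ((Submodule.finrank_map_le _ _).trans h)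

theorem two_mul_le_sDist {v k : ℕ} {U W : Submodule K (Fin v → K)} (hU : finrank K U = k)
    (hW : finrank K W = k) (h : finrank K ↥(U ⊓ W) ≤ 1) : 2 * (k - 1) ≤ sDist U W := by
  have := Submodule.finrank_sup_add_finrank_inf_eq U W
  unfold sDist
  omega

end Submodules

section ExceptionalFamily

variable {K L F : Type} [Field K] [Field L] [Algebra K L] [AddCommGroup F] [Module K F]

/-- The map whose range is the exceptional codeword attached to `a : L`. -/
noncomputable def affineCodewordMap (φ : L →ₗ[K] F) (a : L) : K × L →ₗ[K] (K × L) × (L × F) :=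
  LinearMap.prod
    ((LinearMap.fst K K L).prod (LinearMap.smulRight (LinearMap.fst K K L) a))
    ((LinearMap.snd K K L).prod (φ ∘ₗ LinearMap.mulLeft K a ∘ₗ LinearMap.snd K K L))

/-- The map whose range is the exceptional codeword at infinity. -/
noncomputable def infinityCodewordMap : (K × K) × F →ₗ[K] (K × L) × (L × F) :=
  LinearMap.prodMap
    (LinearMap.prodMap LinearMap.id (Algebra.linearMap K L)
      ∘ₗ (LinearMap.prod 0 (LinearMap.fst K K K)))
    LinearMap.id ∘ₗ
  LinearMap.prod (LinearMap.fst K (K × K) F)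
    (LinearMap.prodMap ((Algebra.linearMap K L) ∘ₗ LinearMap.snd K K K) LinearMap.id)

/-- The exceptional codewords: subspaces meeting `0 × (L × F)` in a hyperplane of themselves. -/
noncomputable def exceptionalCodeword (φ : L →ₗ[K] F) :
    Option L → Submodule K ((K × L) × (L × F))
  | none => LinearMap.range (infinityCodewordMap (K := K) (L := L) (F := F))
  | some a => LinearMap.range (affineCodewordMap φ a)

theorem mem_exceptionalCodeword_some {φ : L →ₗ[K] F} {a : L} {p : (K × L) × (L × F)} :
    p ∈ exceptionalCodeword φ (some a) ↔
      ∃ (t : K) (x : L), p = ((t, t • a), (x, φ (a * x))) := by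
  simp [exceptionalCodeword, affineCodewordMap, eq_comm]

theorem mem_exceptionalCodeword_none {φ : L →ₗ[K] F} {p : (K × L) × (L × F)} :
    p ∈ exceptionalCodeword φ none ↔
      ∃ (t s : K) (y : F), p = ((0, t • (1 : L)), (s • (1 : L), y)) := by
  simp [exceptionalCodeword, infinityCodewordMap, eq_comm, Algebra.smul_def]

theorem finrank_exceptionalCodeword [FiniteDimensional K L] [FiniteDimensional K F]
    (hLF : finrank K L = finrank K F + 1) (φ : L →ₗ[K] F) (i : Option L) :
    finrank K (exceptionalCodeword φ i) = finrank K L + 1 := by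
  cases i with
  | none =>
    rw [exceptionalCodeword, LinearMap.finrank_range_of_inj]
    · simp [hLF]; ring
    · rintro ⟨⟨t, s⟩, y⟩ ⟨⟨t', s'⟩, y'⟩ h
      simpa [infinityCodewordMap, and_assoc] using h
  | some a =>
    rw [exceptionalCodeword, LinearMap.finrank_range_of_inj]
    · simp [add_comm]
    · rintro ⟨t, x⟩ ⟨t', x'⟩ h
      simp [affineCodewordMap] at h
      simp [h]

theorem finrank_exceptionalCodeword_inf_graph_le (φ : L →ₗ[K] F) (i : Option L)
    (f : K × L →ₗ[K] L × F) : finrank K ↥(exceptionalCodeword φ i ⊓ f.graph) ≤ 1 := by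
  obtain ⟨u, hu⟩ : ∃ u : K × L, ∀ p ∈ exceptionalCodeword φ i, ∃ t : K, p.1 = t • u := by
    cases i with
    | none =>
      refine ⟨(0, 1), fun p hp => ?_⟩
      obtain ⟨t, s, y, rfl⟩ := mem_exceptionalCodeword_none.1 hp
      exact ⟨t, by simp⟩
    | some a =>
      refine ⟨(1, a), fun p hp => ?_⟩
      obtain ⟨t, x, rfl⟩ := mem_exceptionalCodeword_some.1 hp
      exact ⟨t, by simp⟩
  refine finrank_le_one_of_forall_smul (u, f u) ?_
  rintro p ⟨hp, hpf⟩
  obtain ⟨t, ht⟩ := hu p hp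
  have hpf : p.2 = f p.1 := hpf
  exact ⟨t, Prod.ext ht (by simp [hpf, ht])⟩

theorem finrank_exceptionalCodeword_inf_le {φ : L →ₗ[K] F} {z : L}
    (hφ : ∀ x, φ x = 0 → ∃ c : K, x = c • z) {i j : Option L} (hij : i ≠ j) :
    finrank K ↥(exceptionalCodeword φ i ⊓ exceptionalCodeword φ j) ≤ 1 := by
  have infinity_affine : ∀ a : L,
      finrank K ↥(exceptionalCodeword φ none ⊓ exceptionalCodeword φ (some a)) ≤ 1 := by
    intro a
    refine finrank_le_one_of_forall_smul ((0, 0), (1, φ a)) ?_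
    rintro p ⟨h₁, h₂⟩
    obtain ⟨t, s, y, rfl⟩ := mem_exceptionalCodeword_none.1 h₁
    obtain ⟨t', x, h⟩ := mem_exceptionalCodeword_some.1 h₂
    simp only [Prod.mk.injEq] at h
    obtain ⟨⟨rfl, ht⟩, rfl, rfl⟩ := h
    rw [zero_smul] at ht
    exact ⟨s, by simp [ht]⟩
  match i, j, hij with
  | none, none, h => exact absurd rfl h
  | none, some a, _ => exact infinity_affine a
  | some a, none, _ => rw [inf_comm]; exact infinity_affine a
  | some a, some b, h =>
    have hab : a - b ≠ 0 := sub_ne_zero.2 fun e => h (congrArg some e)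
    refine finrank_le_one_of_forall_smul ((0, 0), (z / (a - b), φ (a * (z / (a - b))))) ?_
    rintro p ⟨h₁, h₂⟩
    obtain ⟨t, x, rfl⟩ := mem_exceptionalCodeword_some.1 h₁
    obtain ⟨t', x', h⟩ := mem_exceptionalCodeword_some.1 h₂
    simp only [Prod.mk.injEq] at h
    obtain ⟨⟨rfl, ht⟩, rfl, hx⟩ := h
    have ht0 : t = 0 := by
      rw [← sub_eq_zero, ← smul_sub] at ht
      exact (smul_eq_zero.1 ht).resolve_right hab
    obtain ⟨c, hc⟩ := hφ ((a - b) * x) (by rw [sub_mul, map_sub, hx, sub_self])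
    have hxc : x = c • (z / (a - b)) := by
      rw [← mul_div_cancel_left₀ x hab, hc, smul_div_assoc]
    refine ⟨c, ?_⟩
    simp [ht0, hxc]

end ExceptionalFamily

section Lifting

variable {K : Type} [Field K] {k v : ℕ}

/-- Concatenation of coordinate vectors of lengths `k` and `v - k`. -/
def concatMap (K : Type) [Field K] (k v : ℕ) :
    (Fin k → K) × (Fin (v - k) → K) →ₗ[K] (Fin v → K) where
  toFun p j := if h : (j : ℕ) < k then p.1 ⟨j, h⟩
    else if h2 : (j : ℕ) - k < v - k then p.2 ⟨(j : ℕ) - k, h2⟩ else 0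
  map_add' p p' := by
    ext j
    simp only [Pi.add_apply]
    split_ifs <;> simp
  map_smul' c p := by
    ext j
    simp only [Pi.smul_apply]
    split_ifs <;> simp

theorem concatMap_injective (hkv : k ≤ v) : Function.Injective (concatMap K k v) := by
  rintro ⟨x, y⟩ ⟨x', y'⟩ h
  refine Prod.ext (funext fun i => ?_) (funext fun i => ?_)
  · have := congrFun h ⟨i, i.2.trans_le hkv⟩
    simpa [concatMap] using this
  · have := congrFun h ⟨i + k, by omega⟩
    simpa [concatMap] using this

theorem concatMap_single_eq_liftRow (A : Matrix (Fin k) (Fin (v - k)) K) (i : Fin k) :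
    concatMap K k v (Pi.single i 1, A i) = liftRow A i := by
  ext j
  by_cases h : (j : ℕ) < k
  · simp [concatMap, liftRow, h, Pi.single_apply, Fin.ext_iff, eq_comm]
  · simp [concatMap, liftRow, h]

theorem span_liftRow_toMatrix' (f : (Fin k → K) →ₗ[K] (Fin (v - k) → K)) :
    Submodule.span K (Set.range (liftRow (LinearMap.toMatrix' f).transpose)) =
      f.graph.map (concatMap K k v) := by
  have hrow : liftRow (LinearMap.toMatrix' f).transpose =
      fun i => (concatMap K k v ∘ₗ LinearMap.id.prod f) (Pi.single i 1) := by
    funext i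
    rw [← concatMap_single_eq_liftRow]
    refine congrArg (concatMap K k v) (Prod.ext rfl (funext fun j => ?_))
    simp [LinearMap.toMatrix'_apply]
  have hcomp : (fun i : Fin k => (concatMap K k v ∘ₗ LinearMap.id.prod f) (Pi.single i 1)) =
      (concatMap K k v ∘ₗ LinearMap.id.prod f) ∘ (Pi.basisFun K (Fin k)) := by
    funext i
    simp
  rw [hrow, hcomp, Set.range_comp, ← Submodule.map_span, Basis.span_eq, Submodule.map_comp,
    Submodule.map_top, LinearMap.graph_eq_range_prod]

end Lifting

/-- A family of subspaces pairwise meeting in dimension at most one is a constant dimension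
code, with as many codewords as indices. -/
theorem isCDC_range_of_pairwise_finrank_inf_le_one {K : Type} [Field K] {ι : Type} {v k : ℕ}
    (hk : 2 ≤ k) (W : ι → Submodule K (Fin v → K)) (hW : ∀ i, finrank K (W i) = k)
    (hinf : ∀ i j, i ≠ j → finrank K ↥(W i ⊓ W j) ≤ 1) :
    IsCDC K v ((2 * (k - 1) : ℕ) : ℤ) (k : ℤ) (Set.range W) ∧ Function.Injective W := by
  refine ⟨⟨?_, ?_⟩, ?_⟩
  · rintro _ ⟨i, rfl⟩
    exact_mod_cast hW i
  · rintro _ ⟨i, rfl⟩ _ ⟨j, rfl⟩ hne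
    exact_mod_cast two_mul_le_sDist (hW i) (hW j) (hinf i j fun e => hne (e ▸ rfl))
  · intro i j hij
    by_contra hne
    have := hinf i j hne
    rw [hij, inf_idem, hW] at this
    omega

theorem exists_linearMap_ker_le_span (K V F : Type) [Field K] [AddCommGroup V] [Module K V]
    [AddCommGroup F] [Module K F] [FiniteDimensional K V] [FiniteDimensional K F]
    (h : finrank K V = finrank K F + 1) :
    ∃ (φ : V →ₗ[K] F) (z : V), ∀ x, φ x = 0 → ∃ c : K, x = c • z := by
  let e : V ≃ₗ[K] K × F := LinearEquiv.ofFinrankEq _ _ (by simp [h, add_comm])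
  refine ⟨LinearMap.snd K K F ∘ₗ e, e.symm (1, 0), fun x hx => ⟨(e x).1, ?_⟩⟩
  apply e.injective
  have hx : (e x).2 = 0 := hx
  ext <;> simp [hx]

/-- Two-parameter linear maps with all nonzero differences having at most a one-dimensional
kernel (a restricted Gabidulin code). -/
theorem exists_gabidulin_family (K : Type) [Field K] [Fintype K] (E B : Type)
    [AddCommGroup E] [Module K E] [AddCommGroup B] [Module K B] [FiniteDimensional K E]
    [FiniteDimensional K B] (hB : finrank K B ≠ 0) (hEB : finrank K E ≤ finrank K B) :
    ∃ (P : Type) (f : P → (E →ₗ[K] B)), Nat.card P = Fintype.card K ^ (2 * finrank K B) ∧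
      ∀ s t, s ≠ t → finrank K (LinearMap.ker (f s - f t)) ≤ 1 := by
  obtain ⟨L, _, _, _, hL⟩ := exists_field_extension_finrank K (finrank K B) hB
  have : FiniteDimensional K L := Module.Finite.of_finite
  let e : L ≃ₗ[K] B := LinearEquiv.ofFinrankEq _ _ hL
  obtain ⟨j, hj⟩ : ∃ j : E →ₗ[K] L, Function.Injective j := by
    rw [← rank_le_iff_exists_linearMap, ← finrank_eq_rank, ← finrank_eq_rank, hL]
    exact_mod_cast hEB
  refine ⟨L × L, fun s => e.toLinearMap ∘ₗ linPoly s.1 s.2 ∘ₗ j, ?_, ?_⟩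
  · rw [Nat.card_prod, Module.natCard_eq_pow_finrank (K := K) (V := L), hL,
      Nat.card_eq_fintype_card, ← pow_add, two_mul]
  · rintro ⟨a, b⟩ ⟨c, d⟩ hne
    have hab : a - c ≠ 0 ∨ b - d ≠ 0 := by
      by_contra! h
      exact hne (Prod.ext (sub_eq_zero.1 h.1) (sub_eq_zero.1 h.2))
    have hker : ∀ x, x ∈ LinearMap.ker (e.toLinearMap ∘ₗ linPoly a b ∘ₗ j -
        e.toLinearMap ∘ₗ linPoly c d ∘ₗ j) → linPoly (K := K) (a - c) (b - d) (j x) = 0 := by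
      intro x hx
      rw [← linPoly_sub]
      apply e.injective
      simpa using hx
    refine finrank_le_one_of_proportional fun z hz hz0 x hx => ?_
    obtain ⟨c, hc⟩ := linPoly_roots_proportional hab
      (fun h => hz0 (hj (h.trans (map_zero j).symm))) (hker z hz) (hker x hx)
    exact ⟨c, hj (by rw [hc, map_smul])⟩

/-- for every `l ≥ 1` there is a
`(6+3l, q^(6+4l) + q^(2+l) + 1, 4+2l; 3+l)_q` CDC containing an LMRD. -/
theorem stmt19 (q : ℕ) (K : Type) [Field K] [Fintype K] (hq : Fintype.card K = q)
    (l : ℕ) (hl : 1 ≤ l) :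
    ∃ C M : Set (Submodule K (Fin (6 + 3 * l) → K)),
      IsCDC K (6 + 3 * l) ((4 + 2 * l : ℕ) : ℤ) ((3 + l : ℕ) : ℤ) C ∧
      IsLMRD q K (6 + 3 * l) (4 + 2 * l) (3 + l) M ∧ M ⊆ C ∧
      C.ncard = q ^ (6 + 4 * l) + q ^ (2 + l) + 1 := by
  subst hq
  obtain ⟨L, _, _, _, hL⟩ := exists_field_extension_finrank K (2 + l) (by omega)
  have : FiniteDimensional K L := Module.Finite.of_finite
  let F : Type := Fin (1 + l) → K
  have hF : finrank K F = 1 + l := by simp [F]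
  have hLF : finrank K L = finrank K F + 1 := by omega
  obtain ⟨φ, z, hφ⟩ := exists_linearMap_ker_le_span K L F hLF
  have hdimE : finrank K (K × L) = 3 + l := by simp [hL]; omega
  have hdimB : finrank K (L × F) = 6 + 3 * l - (3 + l) := by
    rw [finrank_prod, hL, hF]; omega
  obtain ⟨P, f, hP, hf⟩ := exists_gabidulin_family K (K × L) (L × F) (by omega) (by omega)
  let eE : (K × L) ≃ₗ[K] (Fin (3 + l) → K) := LinearEquiv.ofFinrankEq _ _ (by simp [hdimE])
  let eB : (L × F) ≃ₗ[K] (Fin (6 + 3 * l - (3 + l)) → K) :=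
    LinearEquiv.ofFinrankEq _ _ (by simp [hdimB])
  let Θ : (K × L) × (L × F) →ₗ[K] (Fin (6 + 3 * l) → K) :=
    concatMap K (3 + l) (6 + 3 * l) ∘ₗ (eE.prodCongr eB).toLinearMap
  have hΘ : Function.Injective Θ :=
    (concatMap_injective (by omega)).comp (eE.prodCongr eB).injective
  let W₀ : P ⊕ Option L → Submodule K ((K × L) × (L × F)) :=
    Sum.elim (fun s => (f s).graph) (exceptionalCodeword φ)
  have hW₀ : ∀ i, finrank K (W₀ i) = 3 + l := by
    rintro (s | o)
    · exact (finrank_graph _).trans hdimE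
    · exact (finrank_exceptionalCodeword hLF φ o).trans (by omega)
  have hinf₀ : ∀ i j, i ≠ j → finrank K ↥(W₀ i ⊓ W₀ j) ≤ 1 := by
    rintro (s | o) (t | o') hne
    · exact finrank_graph_inf_graph_le (hf s t fun e => hne (e ▸ rfl))
    · rw [inf_comm]
      exact finrank_exceptionalCodeword_inf_graph_le φ o' (f s)
    · exact finrank_exceptionalCodeword_inf_graph_le φ o (f t)
    · exact finrank_exceptionalCodeword_inf_le hφ fun e => hne (e ▸ rfl)
  let W : P ⊕ Option L → Submodule K (Fin (6 + 3 * l) → K) := fun i => (W₀ i).map Θ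
  obtain ⟨hC, hWinj⟩ := isCDC_range_of_pairwise_finrank_inf_le_one (k := 3 + l) (by omega) W
    (fun i => (Submodule.equivMapOfInjective Θ hΘ (W₀ i)).finrank_eq.symm.trans (hW₀ i))
    (fun i j hne => by
      change finrank K ↥((W₀ i).map Θ ⊓ (W₀ j).map Θ) ≤ 1
      rw [← Submodule.map_inf Θ hΘ]
      exact (Submodule.finrank_map_le _ _).trans (hinf₀ i j hne))
  let g : P → ((Fin (3 + l) → K) →ₗ[K] (Fin (6 + 3 * l - (3 + l)) → K)) :=
    fun s => eB.toLinearMap ∘ₗ f s ∘ₗ eE.symm.toLinearMap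
  let A : P → Matrix (Fin (3 + l)) (Fin (6 + 3 * l - (3 + l))) K :=
    fun s => (LinearMap.toMatrix' (g s)).transpose
  have hspan : ∀ s, Submodule.span K (Set.range (liftRow (A s))) = W (.inl s) := by
    intro s
    rw [span_liftRow_toMatrix']
    change _ = Submodule.map (concatMap K _ _ ∘ₗ (eE.prodCongr eB).toLinearMap) (f s).graph
    rw [Submodule.map_comp]
    congr 1
    ext ⟨x, y⟩
    constructor
    · intro h
      have h : y = eB (f s (eE.symm x)) := h
      exact ⟨(eE.symm x, f s (eE.symm x)), rfl, by simp [h]⟩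
    · rintro ⟨⟨x', y'⟩, h, h'⟩
      have h : y' = f s x' := h
      simp only [LinearEquiv.coe_coe, LinearEquiv.prodCongr_apply, Prod.mk.injEq] at h'
      obtain ⟨rfl, rfl⟩ := h'
      simp [g, h]
  have hAinj : Function.Injective A := by
    intro s t hst
    have : W (.inl s) = W (.inl t) := by rw [← hspan, ← hspan, hst]
    exact Sum.inl_injective (hWinj this)
  have hrank : ∀ s t, s ≠ t → 2 + l ≤ (A s - A t).rank := by
    intro s t hne
    have hA : A s - A t = (LinearMap.toMatrix' (g s - g t)).transpose := by
      simp [A]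
    have hg : g s - g t = eB.toLinearMap ∘ₗ (f s - f t) ∘ₗ eE.symm.toLinearMap := by
      ext; simp [g]
    rw [hA, Matrix.rank_transpose, Matrix.rank, ← Matrix.toLin'_apply', Matrix.toLin'_toMatrix',
      hg, LinearMap.range_comp, LinearEquiv.finrank_map_eq,
      LinearMap.range_comp_of_range_eq_top _ (LinearEquiv.range _)]
    have h₁ := hf s t hne
    have h₂ := LinearMap.finrank_range_add_finrank_ker (f s - f t)
    omega
  have hPcard : Nat.card P = Fintype.card K ^ (6 + 4 * l) := by
    rw [hP, hdimB]
    congr 1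
    omega
  have : Finite P := Nat.finite_of_card_ne_zero (by rw [hPcard]; positivity)
  refine ⟨Set.range W, Set.range (W ∘ Sum.inl), ?_, ⟨Set.range A, ?_, ?_, ?_⟩,
    Set.range_comp_subset_range _ _, ?_⟩
  · convert hC using 2
    omega
  · rw [← Set.image_univ, Set.ncard_image_of_injective _ hAinj, Set.ncard_univ, hPcard]
    congr 1
    have h₁ : 6 + 3 * l - (3 + l) = 3 + 2 * l := by omega
    have h₂ : 3 + l - (4 + 2 * l) / 2 + 1 = 2 := by omega
    rw [h₁, h₂]
    ring
  · rintro _ ⟨s, rfl⟩ _ ⟨t, rfl⟩ hne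
    have := hrank s t fun e => hne (e ▸ rfl)
    omega
  · ext U
    constructor
    · rintro ⟨s, rfl⟩
      exact ⟨A s, ⟨s, rfl⟩, (hspan s).symm⟩
    · rintro ⟨_, ⟨s, rfl⟩, rfl⟩
      exact ⟨s, (hspan s).symm⟩
  · rw [← Set.image_univ, Set.ncard_image_of_injective _ hWinj, Set.ncard_univ, Nat.card_sum,
      Finite.card_option, hPcard, Module.natCard_eq_pow_finrank (K := K) (V := L), hL,
      Nat.card_eq_fintype_card, add_assoc]
end
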